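/- Let X be a real Banach space with a partially greedy Schauder basis (e_n). Then there exists a constant C₁ such that for every x ∈ X, every m ∈ ℕ, every greedy ordering for x, every finite set A ⊆ {1, …, α_m(x) − 1} with |A| ≤ m, and every y ∈ X satisfying e_i^*(y) = e_i^*(x) for all i ∉ A, one has ‖x‖ ≤ C₁‖y‖. -/

import Mathlib

open Filter Topology

/-- A Schauder basis of a real normed space `X`, given by basis vectors `e n` together with
biorthogonal (coordinate) functionals `f n`, such that every `x` is the limit of its
partial-sum expansion `∑_{n < N} f n x • e n`. -/
structure SchauderBasisSys (X : Type*) [NormedAddCommGroup X] [NormedSpace ℝ X] where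
  e : ℕ → X
  f : ℕ → X →L[ℝ] ℝ
  biorth : ∀ m n : ℕ, f m (e n) = if m = n then (1 : ℝ) else 0
  expansion : ∀ x : X,
    Filter.Tendsto (fun N : ℕ => ∑ n ∈ Finset.range N, f n x • e n) Filter.atTop (nhds x)

namespace SchauderBasisSys

variable {X : Type*} [NormedAddCommGroup X] [NormedSpace ℝ X]

/-- The coordinate projection onto a finite set `A` of indices: `P_A x = ∑_{i ∈ A} e_i^*(x) e_i`. -/
noncomputable def P (S : SchauderBasisSys X) (A : Finset ℕ) (x : X) : X :=
  ∑ i ∈ A, S.f i x • S.e i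

/-- The indicator vector `1_A = ∑_{i ∈ A} e_i`. -/
noncomputable def ind (S : SchauderBasisSys X) (A : Finset ℕ) : X :=
  ∑ i ∈ A, S.e i

/-- A greedy ordering for `x`: an injection `ρ : ℕ → ℕ` whose range contains the support of `x`
and which rearranges the coordinates of `x` in nonincreasing order of absolute value. -/
def IsGreedyOrdering (S : SchauderBasisSys X) (x : X) (ρ : ℕ → ℕ) : Prop :=
  Function.Injective ρ ∧ (∀ n : ℕ, S.f n x ≠ 0 → n ∈ Set.range ρ) ∧
    ∀ j k : ℕ, j ≤ k → |S.f (ρ k) x| ≤ |S.f (ρ j) x|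

/-- The greedy set `Λ_m(x) = {ρ(0), …, ρ(m-1)}` associated to a greedy ordering `ρ`. -/
def Lam (ρ : ℕ → ℕ) (m : ℕ) : Finset ℕ := (Finset.range m).image ρ

/-- The `m`-th greedy approximation `G_m(x) = ∑_{j < m} e_{ρ(j)}^*(x) e_{ρ(j)}`. -/
noncomputable def G (S : SchauderBasisSys X) (x : X) (ρ : ℕ → ℕ) (m : ℕ) : X :=
  ∑ j ∈ Finset.range m, S.f (ρ j) x • S.e (ρ j)

/-- Quasi-greedy: `‖G_m(x)‖ ≤ K ‖x‖` uniformly. -/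
def QuasiGreedy (S : SchauderBasisSys X) : Prop :=
  ∃ K : ℝ, ∀ (x : X) (ρ : ℕ → ℕ) (m : ℕ),
    S.IsGreedyOrdering x ρ → ‖S.G x ρ m‖ ≤ K * ‖x‖

/-- Conservative: `‖1_A‖ ≤ Γ ‖1_B‖` whenever `|A| ≤ |B|` and `max A < min B`. -/
def Conservative (S : SchauderBasisSys X) : Prop :=
  ∃ Γ : ℝ, ∀ A B : Finset ℕ, A.card ≤ B.card →
    (∀ i ∈ A, ∀ j ∈ B, i < j) → ‖S.ind A‖ ≤ Γ * ‖S.ind B‖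

/-- Reverse conservative: `‖1_A‖ ≤ Γ ‖1_B‖` whenever `|A| ≤ |B|` and `max B < min A`. -/
def ReverseConservative (S : SchauderBasisSys X) : Prop :=
  ∃ Γ : ℝ, ∀ A B : Finset ℕ, A.card ≤ B.card →
    (∀ i ∈ A, ∀ j ∈ B, j < i) → ‖S.ind A‖ ≤ Γ * ‖S.ind B‖

/-- Partially greedy: `‖x - G_m(x)‖ ≤ C ‖∑_{n ≥ m} e_n^*(x) e_n‖ = C ‖x - P_{[0,m)}(x)‖`. -/
def PartiallyGreedy (S : SchauderBasisSys X) : Prop :=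
  ∃ C : ℝ, ∀ (x : X) (ρ : ℕ → ℕ) (m : ℕ), S.IsGreedyOrdering x ρ →
    ‖x - S.G x ρ m‖ ≤ C * ‖x - S.P (Finset.range m) x‖

/-- Almost greedy: `‖x - G_m(x)‖ ≤ C inf{‖x - P_A(x)‖ : |A| ≤ m}`. -/
def AlmostGreedy (S : SchauderBasisSys X) : Prop :=
  ∃ C : ℝ, ∀ (x : X) (ρ : ℕ → ℕ) (m : ℕ) (A : Finset ℕ), S.IsGreedyOrdering x ρ →
    A.card ≤ m → ‖x - S.G x ρ m‖ ≤ C * ‖x - S.P A x‖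

end SchauderBasisSys

open SchauderBasisSys

namespace SchauderBasisSys

lemma card_lam {ρ : ℕ → ℕ} (hρ : Function.Injective ρ) (m : ℕ) : (Lam ρ m).card = m := by
  rw [Lam, Finset.card_image_of_injective _ hρ, Finset.card_range]

/-- A sequence tending to zero attains its maximal absolute value off any finite set. -/
lemma exists_notMem_forall_abs_le {a : ℕ → ℝ} (ha : Tendsto a cofinite (𝓝 0)) (F : Finset ℕ) :
    ∃ i, i ∉ F ∧ ∀ j, j ∉ F → |a j| ≤ |a i| := by
  by_cases h : ∃ j, j ∉ F ∧ 0 < |a j|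
  · obtain ⟨j, hjF, hj⟩ := h
    have hfin : {i | |a j| ≤ |a i|}.Finite := by
      have h0 : Tendsto (fun i => |a i|) cofinite (𝓝 0) := by simpa using ha.abs
      simpa [Filter.eventually_cofinite] using h0.eventually_lt_const hj
    obtain ⟨i, hi, hmax⟩ := Set.exists_max_image ({i | |a j| ≤ |a i|} ∩ {i | i ∉ F})
      (fun i => |a i|) (hfin.inter_of_left _) ⟨j, le_refl |a j|, hjF⟩
    refine ⟨i, hi.2, fun k hk => ?_⟩
    rcases le_total (|a j|) (|a k|) with hjk | hjk
    · exact hmax k ⟨hjk, hk⟩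
    · exact hjk.trans hi.1
  · push Not at h
    obtain ⟨i, hi⟩ := Infinite.exists_notMem_finset F
    exact ⟨i, hi, fun j hj => (h j hj).trans (abs_nonneg _)⟩

/-- A sequence tending to zero can be enumerated in nonincreasing order of absolute value. -/
lemma exists_decreasing_enumeration {a : ℕ → ℝ} (ha : Tendsto a cofinite (𝓝 0)) :
    ∃ ρ : ℕ → ℕ, Function.Injective ρ ∧ (∀ n, a n ≠ 0 → n ∈ Set.range ρ) ∧
      ∀ j k, j ≤ k → |a (ρ k)| ≤ |a (ρ j)| := by
  choose next hnext hmax using exists_notMem_forall_abs_le ha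
  let F : ℕ → Finset ℕ := fun n => Nat.rec ∅ (fun _ s => insert (next s) s) n
  have hsucc : ∀ n, F (n + 1) = insert (next (F n)) (F n) := fun _ => rfl
  have hmono : Monotone F := monotone_nat_of_le_succ fun n => by
    rw [hsucc]; exact Finset.subset_insert _ _
  have hmem : ∀ j k, j < k → next (F j) ∈ F k := fun j k hjk =>
    hmono (Nat.succ_le_of_lt hjk) (by rw [hsucc]; exact Finset.mem_insert_self _ _)
  have hinj : Function.Injective fun n => next (F n) := by
    intro j k hjk
    dsimp only at hjk
    rcases lt_trichotomy j k with h | h | h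
    · exact absurd (hjk ▸ hmem j k h) (hnext _)
    · exact h
    · exact absurd (hjk ▸ hmem k j h) (hnext _)
  have hF : ∀ n i, i ∈ F n → ∃ k, next (F k) = i := by
    intro n
    induction n with
    | zero => intro i hi; exact absurd hi (Finset.notMem_empty i)
    | succ n ih =>
      intro i hi
      rw [hsucc, Finset.mem_insert] at hi
      rcases hi with rfl | hi
      · exact ⟨n, rfl⟩
      · exact ih i hi
  refine ⟨fun n => next (F n), hinj, fun n hn => ?_, fun j k hjk => ?_⟩
  · by_contra hcon
    have hle : ∀ k, |a n| ≤ |a (next (F k))| := fun k =>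
      hmax _ _ fun hmemF => hcon (hF k n hmemF)
    have h0 : Tendsto (fun k => |a (next (F k))|) cofinite (𝓝 0) := by
      simpa using (ha.comp hinj.tendsto_cofinite).abs
    exact (abs_pos.2 hn).not_ge (ge_of_tendsto' h0 hle)
  · exact hmax _ _ fun hmemF => hnext (F k) (hmono hjk hmemF)

/-- The decreasing enumeration may be chosen to start with any prescribed finite set on which
the sequence dominates its values elsewhere. -/
lemma exists_decreasing_enumeration_lam {a : ℕ → ℝ} (ha : Tendsto a cofinite (𝓝 0))
    {L : Finset ℕ} (hL : ∀ i ∈ L, ∀ j, j ∉ L → |a j| ≤ |a i|) :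
    ∃ ρ : ℕ → ℕ, (Function.Injective ρ ∧ (∀ n, a n ≠ 0 → n ∈ Set.range ρ) ∧
      ∀ j k, j ≤ k → |a (ρ k)| ≤ |a (ρ j)|) ∧ Lam ρ L.card = L := by
  obtain ⟨i₀, -, hi₀⟩ := exists_notMem_forall_abs_le ha ∅
  have hM : ∀ i, |a i| < |a i₀| + 1 := fun i =>
    (hi₀ i (Finset.notMem_empty i)).trans_lt (lt_add_one _)
  set M := |a i₀| + 1
  have hM0 : 0 < M := (abs_nonneg _).trans_lt (hM 0)
  let b : ℕ → ℝ := fun i => if i ∈ L then M + |a i| else a i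
  have hbL : ∀ i ∈ L, |b i| = M + |a i| := fun i hi => by
    simp only [b, if_pos hi]; exact abs_of_nonneg (by positivity)
  have hbN : ∀ i, i ∉ L → b i = a i := fun i hi => if_neg hi
  have hb : Tendsto b cofinite (𝓝 0) := by
    refine ha.congr' ?_
    filter_upwards [L.finite_toSet.compl_mem_cofinite] with i hi
    exact (hbN i hi).symm
  obtain ⟨ρ, hinj, hrange, hdec⟩ := exists_decreasing_enumeration hb
  have hdown : ∀ j k, j ≤ k → ρ k ∈ L → ρ j ∈ L := by
    intro j k hjk hk
    by_contra hj
    have h := hdec j k hjk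
    rw [hbL _ hk, hbN _ hj] at h
    linarith [hM (ρ j), abs_nonneg (a (ρ k))]
  refine ⟨ρ, ⟨hinj, fun n hn => hrange n ?_, fun j k hjk => ?_⟩, ?_⟩
  · by_cases h : n ∈ L
    · rw [← abs_pos, hbL n h]; positivity
    · rwa [hbN n h]
  · have h := hdec j k hjk
    by_cases hk : ρ k ∈ L
    · have hj := hdown j k hjk hk
      rw [hbL _ hk, hbL _ hj] at h
      linarith
    · by_cases hj : ρ j ∈ L
      · exact hL _ hj _ hk
      · rwa [hbN _ hk, hbN _ hj] at h
  · symm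
    refine Finset.eq_of_subset_of_card_le (fun i hi => ?_) ?_
    · obtain ⟨k, rfl⟩ := hrange i (by rw [← abs_pos, hbL i hi]; positivity)
      refine Finset.mem_image_of_mem _ (Finset.mem_range.2 ?_)
      by_contra hk
      have hsub : (Finset.range (k + 1)).image ρ ⊆ L := by
        intro i hi'
        obtain ⟨j, hj, rfl⟩ := Finset.mem_image.1 hi'
        exact hdown j k (Nat.lt_succ_iff.1 (Finset.mem_range.1 hj)) hi
      have := Finset.card_le_card hsub
      rw [Finset.card_image_of_injective _ hinj, Finset.card_range] at this
      omega
    · rw [card_lam hinj]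

section

variable {X : Type*} [NormedAddCommGroup X] [NormedSpace ℝ X] (S : SchauderBasisSys X)

lemma f_sum_smul (A : Finset ℕ) (c : ℕ → ℝ) (i : ℕ) :
    S.f i (∑ j ∈ A, c j • S.e j) = if i ∈ A then c i else 0 := by
  simp [map_sum, S.biorth]

lemma f_P (A : Finset ℕ) (x : X) (i : ℕ) :
    S.f i (S.P A x) = if i ∈ A then S.f i x else 0 :=
  S.f_sum_smul A (fun j => S.f j x) i

lemma ext_f {x y : X} (h : ∀ i, S.f i x = S.f i y) : x = y := by
  refine tendsto_nhds_unique (S.expansion x) ?_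
  simpa only [h] using S.expansion y

lemma exists_partialSum_bound [CompleteSpace X] :
    ∃ K : ℝ, 0 ≤ K ∧ ∀ (n : ℕ) (x : X), ‖S.P (Finset.range n) x‖ ≤ K * ‖x‖ := by
  let T : ℕ → X →L[ℝ] X := fun n => ∑ i ∈ Finset.range n, (S.f i).smulRight (S.e i)
  have hT : ∀ n x, T n x = S.P (Finset.range n) x := fun n x => by
    simp [T, P]
  obtain ⟨K, hK⟩ := banach_steinhaus (g := T) fun x => by
    obtain ⟨K, hK⟩ := (Metric.isBounded_range_of_tendsto _ (S.expansion x)).exists_norm_le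
    exact ⟨K, fun n => by rw [hT]; exact hK _ ⟨n, rfl⟩⟩
  exact ⟨K, (norm_nonneg _).trans (hK 0), fun n x => by
    rw [← hT]; exact (T n).le_of_opNorm_le (hK n) x⟩

lemma G_eq_P_lam {x : X} {ρ : ℕ → ℕ} (hρ : Function.Injective ρ) (m : ℕ) :
    S.G x ρ m = S.P (Lam ρ m) x := by
  rw [G, P, Lam, Finset.sum_image hρ.injOn]

variable {S}

lemma IsGreedyOrdering.abs_le {x : X} {ρ : ℕ → ℕ} (hρ : S.IsGreedyOrdering x ρ) {m i j : ℕ}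
    (hi : i ∈ Lam ρ m) (hj : j ∉ Lam ρ m) : |S.f j x| ≤ |S.f i x| := by
  obtain ⟨k, hk, rfl⟩ := Finset.mem_image.1 hi
  by_cases h : S.f j x = 0
  · simp [h]
  · obtain ⟨l, rfl⟩ := hρ.2.1 j h
    have hl : ¬ l < m := fun hl => hj (Finset.mem_image_of_mem _ (Finset.mem_range.2 hl))
    have := Finset.mem_range.1 hk
    exact hρ.2.2 k l (by omega)

/-- The partially greedy inequality for any greedy set of a vector with coordinates tending to
zero. -/
lemma norm_sub_P_le {C : ℝ} (hC : ∀ (x : X) (ρ : ℕ → ℕ) (m : ℕ), S.IsGreedyOrdering x ρ →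
      ‖x - S.G x ρ m‖ ≤ C * ‖x - S.P (Finset.range m) x‖)
    {x : X} (hx : Tendsto (fun i => S.f i x) cofinite (𝓝 0)) {L : Finset ℕ}
    (hL : ∀ i ∈ L, ∀ j, j ∉ L → |S.f j x| ≤ |S.f i x|) :
    ‖x - S.P L x‖ ≤ C * ‖x - S.P (Finset.range L.card) x‖ := by
  obtain ⟨ρ, hρ, hlam⟩ := exists_decreasing_enumeration_lam hx hL
  simpa only [S.G_eq_P_lam hρ.1, hlam] using hC x ρ L.card hρ

/-- A partially greedy basis is bounded away from zero, so all coordinate sequences tend to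
zero. -/
lemma PartiallyGreedy.tendsto_f (hPG : S.PartiallyGreedy) (x : X) :
    Tendsto (fun i => S.f i x) cofinite (𝓝 0) := by
  obtain ⟨C, hC⟩ := hPG
  have he : ∀ n, 1 ≤ n → ‖S.e 0‖ ≤ C * ‖S.e n‖ := by
    intro n hn
    have hf : ∀ i, S.f i (S.e 0 + S.e n) = (if i = 0 then 1 else 0) + if i = n then 1 else 0 :=
      fun i => by rw [map_add, S.biorth, S.biorth]
    have htend : Tendsto (fun i => S.f i (S.e 0 + S.e n)) cofinite (𝓝 0) := by
      refine tendsto_const_nhds.congr' ?_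
      filter_upwards [(Set.toFinite {0, n}).compl_mem_cofinite] with i hi
      simp only [Set.mem_compl_iff, Set.mem_insert_iff, Set.mem_singleton_iff, not_or] at hi
      simp [hf, hi.1, hi.2]
    have h := norm_sub_P_le hC (L := {n}) htend fun i hi j hj => by
      rw [Finset.mem_singleton] at hi hj
      subst hi
      have h0 : i ≠ 0 := by omega
      rw [hf, hf, if_neg hj, if_neg h0, if_pos rfl]
      split_ifs <;> simp
    have hn0 : n ≠ 0 := by omega
    simpa [P, hf, hn0, hn0.symm] using h
  have he0 : 0 < ‖S.e 0‖ := norm_pos_iff.2 fun h => by simpa [h] using S.biorth 0 0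
  have hC0 : 0 < C := by
    by_contra hneg
    nlinarith [he 1 le_rfl, norm_nonneg (S.e 1)]
  rw [Nat.cofinite_eq_atTop]
  have hterm : Tendsto (fun i => ‖S.f i x • S.e i‖) atTop (𝓝 0) := by
    have h := (((tendsto_add_atTop_iff_nat 1).2 (S.expansion x)).sub (S.expansion x)).norm
    simpa [Finset.sum_range_succ] using h
  refine squeeze_zero_norm' (a := fun i => C / ‖S.e 0‖ * ‖S.f i x • S.e i‖) ?_
    (by simpa using hterm.const_mul (C / ‖S.e 0‖))
  filter_upwards [eventually_ge_atTop 1] with i hi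
  rw [norm_smul, div_mul_eq_mul_div, le_div_iff₀ he0]
  nlinarith [mul_le_mul_of_nonneg_left (he i hi) (norm_nonneg (S.f i x))]

/-- Replacing a greedy set `B` of a tail of `x` by an equally large set `A` of earlier indices,
with dominated coefficients, is a bounded operation. -/
lemma norm_sum_add_tail_sub_P_le {C : ℝ}
    (hC : ∀ (x : X) (ρ : ℕ → ℕ) (m : ℕ), S.IsGreedyOrdering x ρ →
      ‖x - S.G x ρ m‖ ≤ C * ‖x - S.P (Finset.range m) x‖)
    {x : X} (hx : Tendsto (fun i => S.f i x) cofinite (𝓝 0)) {N : ℕ} {A B : Finset ℕ}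
    (hA : ∀ i ∈ A, i < N) (hB : ∀ i ∈ B, N ≤ i) (hcard : A.card = B.card)
    (hgreedy : ∀ i ∈ B, ∀ j, j ∉ B → |S.f j x| ≤ |S.f i x|)
    {c : ℕ → ℝ} (hc : ∀ i ∈ A, ∀ j ∈ B, |c i| ≤ |S.f j x|) :
    ‖∑ i ∈ A, c i • S.e i + (x - S.P (Finset.range N) x) - S.P B x‖ ≤
      C * ‖x - S.P (Finset.range N) x‖ := by
  obtain ⟨i₀, -, hM⟩ := exists_notMem_forall_abs_le hx ∅
  simp only [Finset.notMem_empty, not_false_eq_true, forall_const] at hM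
  set M := |S.f i₀ x|
  have hM0 : |M| = M := abs_of_nonneg (abs_nonneg _)
  have hcM : ∀ i ∈ A, |c i| ≤ M := fun i hi => by
    obtain ⟨j, hj⟩ : B.Nonempty := Finset.card_pos.1 (hcard ▸ Finset.card_pos.2 ⟨i, hi⟩)
    exact (hc i hi j hj).trans (hM j)
  let d : ℕ → ℝ := fun i => if i ∈ A then c i else M
  let v : X := ∑ i ∈ Finset.range N, d i • S.e i + (x - S.P (Finset.range N) x)
  have hv : ∀ i, S.f i v = if i < N then d i else S.f i x := fun i => by
    simp only [v, map_add, map_sub, S.f_sum_smul, S.f_P, Finset.mem_range]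
    split_ifs <;> ring
  have hvtend : Tendsto (fun i => S.f i v) cofinite (𝓝 0) := by
    refine hx.congr' ?_
    filter_upwards [(Finset.range N).finite_toSet.compl_mem_cofinite] with i hi
    rw [hv, if_neg (by simpa using hi)]
  let L : Finset ℕ := (Finset.range N \ A) ∪ B
  have hmemL : ∀ i, i ∈ L ↔ (i < N ∧ i ∉ A) ∨ i ∈ B := fun i => by simp [L]
  have hLcard : L.card = N := by
    have hdisj : Disjoint (Finset.range N \ A) B := Finset.disjoint_left.2 fun i hi hiB => by
      have := hB i hiB
      simp only [Finset.mem_sdiff, Finset.mem_range] at hi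
      omega
    have hsub : A ⊆ Finset.range N := fun i hi => Finset.mem_range.2 (hA i hi)
    have := Finset.card_le_card hsub
    rw [Finset.card_union_of_disjoint hdisj, Finset.card_sdiff_of_subset hsub, ← hcard]
    rw [Finset.card_range] at *
    omega
  have hLgreedy : ∀ i ∈ L, ∀ j, j ∉ L → |S.f j v| ≤ |S.f i v| := by
    intro i hi j hj
    rw [hmemL, not_or, not_and, not_not] at hj
    rw [hmemL] at hi
    rw [hv, hv]
    rcases hi with ⟨hiN, hiA⟩ | hiB
    · simp only [if_pos hiN, d, if_neg hiA, hM0]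
      by_cases hjN : j < N
      · simpa only [if_pos hjN, if_pos (hj.1 hjN)] using hcM j (hj.1 hjN)
      · simpa only [if_neg hjN] using hM j
    · rw [if_neg (hB i hiB).not_gt]
      by_cases hjN : j < N
      · simpa only [if_pos hjN, d, if_pos (hj.1 hjN)] using hc j (hj.1 hjN) i hiB
      · simpa only [if_neg hjN] using hgreedy i hiB j hj.2
  have h := norm_sub_P_le hC hvtend hLgreedy
  have hleft : v - S.P L v =
      ∑ i ∈ A, c i • S.e i + (x - S.P (Finset.range N) x) - S.P B x := by
    refine S.ext_f fun i => ?_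
    simp only [map_add, map_sub, S.f_sum_smul, S.f_P, hv, hmemL, Finset.mem_range, d]
    have h1 := hA i
    have h2 := hB i
    by_cases hiN : i < N <;> by_cases hiA : i ∈ A <;> by_cases hiB : i ∈ B <;>
      first | (exfalso; grind) | simp [hiN, hiA, hiB]
  have hright : v - S.P (Finset.range L.card) v = x - S.P (Finset.range N) x := by
    refine S.ext_f fun i => ?_
    simp only [map_sub, S.f_P, hv, hLcard, Finset.mem_range]
    split_ifs <;> ring
  rwa [hleft, hright] at h

end

end SchauderBasisSys

/-- If a Schauder basis of a real Banach space is partially greedy, then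
there is a constant `C₁` such that for every `x`, every `m`, every greedy ordering for
`x`, every finite `A` with `|A| ≤ m` all of whose elements are below
`α_m(x) = min Λ_m(x)`, and every `y` agreeing with `x` in all coordinates outside `A`,
one has `‖x‖ ≤ C₁ ‖y‖`. -/
theorem stmt_18 {X : Type*} [NormedAddCommGroup X] [NormedSpace ℝ X] [CompleteSpace X]
    (S : SchauderBasisSys X) (hPG : S.PartiallyGreedy) :
    ∃ C₁ : ℝ, ∀ (x y : X) (ρ : ℕ → ℕ) (m : ℕ) (A : Finset ℕ),
      S.IsGreedyOrdering x ρ → A.card ≤ m →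
      (∀ i ∈ A, ∀ j ∈ Lam ρ m, i < j) →
      (∀ i : ℕ, i ∉ A → S.f i y = S.f i x) →
      ‖x‖ ≤ C₁ * ‖y‖ := by
  have htend := hPG.tendsto_f
  obtain ⟨C₀, hC₀⟩ := hPG
  obtain ⟨C, hC0, hC⟩ : ∃ C : ℝ, 0 ≤ C ∧ ∀ (x : X) (ρ : ℕ → ℕ) (m : ℕ),
      S.IsGreedyOrdering x ρ → ‖x - S.G x ρ m‖ ≤ C * ‖x - S.P (Finset.range m) x‖ :=
    ⟨max C₀ 0, le_max_right _ _, fun x ρ m hρ => (hC₀ x ρ m hρ).trans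
      (mul_le_mul_of_nonneg_right (le_max_left _ _) (norm_nonneg _))⟩
  obtain ⟨K, hK0, hK⟩ := S.exists_partialSum_bound
  have htail : ∀ (n : ℕ) (z : X), ‖z - S.P (Finset.range n) z‖ ≤ (1 + K) * ‖z‖ := fun n z => by
    linarith [norm_sub_le z (S.P (Finset.range n) z), hK n z]
  refine ⟨(4 * C + 1) * (1 + K), fun x y ρ m A hρ hAm hAB hxy => ?_⟩
  set B := Lam ρ A.card
  have hBgreedy : ∀ i ∈ B, ∀ j, j ∉ B → |S.f j x| ≤ |S.f i x| := fun i hi j hj => hρ.abs_le hi hj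
  have hcard : A.card = B.card := (card_lam hρ.1 _).symm
  have hAB' : ∀ i ∈ A, ∀ j ∈ B, i < j := fun i hi j hj =>
    hAB i hi j (Finset.image_subset_image (Finset.range_subset_range.2 hAm) hj)
  set N := A.sup (· + 1)
  have hAN : ∀ i ∈ A, i < N := fun i hi => Finset.le_sup (f := (· + 1)) hi
  have hBN : ∀ j ∈ B, N ≤ j := fun j hj => Finset.sup_le fun i hi => hAB' i hi j hj
  have hyB : ∀ j ∈ B, S.f j y = S.f j x := fun j hj =>
    hxy j fun hjA => (hAB' j hjA j hj).ne rfl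
  have hAnotB : ∀ i ∈ A, i ∉ B := fun i hi hiB => (hAB' i hi i hiB).ne rfl
  have hu : x - S.P (Finset.range N) x = y - S.P (Finset.range N) y := by
    refine S.ext_f fun i => ?_
    simp only [map_sub, S.f_P, Finset.mem_range]
    by_cases hi : i < N
    · simp [hi]
    · simp [hi, hxy i fun hiA => hi (hAN i hiA)]
  -- the coordinates in `A` along which `y` exceeds the smallest coordinate of `x` on `B`
  let D : Finset ℕ := A.filter fun i => ∃ j ∈ B, |S.f j x| < |S.f i y|
  have hD : ∀ i, i ∈ D ↔ i ∈ A ∧ ∃ j ∈ B, |S.f j x| < |S.f i y| := fun i => Finset.mem_filter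
  have hsmall : ∀ i, i ∉ D → i ∉ B → ∀ j ∈ B, |S.f i y| ≤ |S.f j x| := by
    intro i hiD hiB j hj
    by_cases hiA : i ∈ A
    · by_contra hlt
      exact hiD ((hD i).2 ⟨hiA, j, hj, not_le.1 hlt⟩)
    · rw [hxy i hiA]
      exact hBgreedy j hj i hiB
  have hy := norm_sub_P_le hC (htend y) (L := D ∪ B) fun i hi j hj => by
    rw [Finset.mem_union, not_or] at hj
    rcases Finset.mem_union.1 hi with hi | hi
    · obtain ⟨-, k, hk, hlt⟩ := (hD i).1 hi
      exact (hsmall j hj.1 hj.2 k hk).trans hlt.le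
    · rw [hyB i hi]
      exact hsmall j hj.1 hj.2 i hi
  have hbound := fun c hc =>
    norm_sum_add_tail_sub_P_le hC (htend x) hAN hBN hcard hBgreedy (c := c) hc
  have hzero := hbound (fun _ => 0) fun i _ j _ => by simp
  have hfx := hbound (fun i => S.f i x) fun i hi j hj => hBgreedy j hj i (hAnotB i hi)
  have hfy := hbound (fun i => if i ∈ D then 0 else S.f i y) fun i hi j hj => by
    by_cases hiD : i ∈ D
    · simp [hiD]
    · simpa [hiD] using hsmall i hiD (hAnotB i hi) j hj
  set u := x - S.P (Finset.range N) x
  have hunorm : ‖u‖ ≤ (1 + K) * ‖y‖ := hu ▸ htail N y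
  set T₀ := ∑ i ∈ A, (0 : ℝ) • S.e i + u - S.P B x with hT₀
  set T₁ := ∑ i ∈ A, S.f i x • S.e i + u - S.P B x with hT₁
  set T₂ := ∑ i ∈ A, (if i ∈ D then 0 else S.f i y) • S.e i + u - S.P B x with hT₂
  have hdecomp : x = (y - S.P (D ∪ B) y) + T₁ - T₂ + (u - T₀) := by
    refine S.ext_f fun i => ?_
    have hf₁ := S.f_sum_smul A (fun i => S.f i x) i
    have hf₂ := S.f_sum_smul A (fun i => if i ∈ D then 0 else S.f i y) i
    simp only [hT₀, hT₁, hT₂, map_add, map_sub, hf₁, hf₂, S.f_P, Finset.mem_union, zero_smul,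
      Finset.sum_const_zero, map_zero]
    have h1 := hAnotB i
    have h2 := hxy i
    have h3 := fun h => ((hD i).1 h).1
    by_cases hiA : i ∈ A <;> by_cases hiB : i ∈ B <;> by_cases hiD : i ∈ D <;>
      first | (exfalso; grind) | (simp [hiA, hiB, hiD]; done) | simp [hiA, hiB, hiD, h2 hiA]
  have hn : ‖x‖ ≤ ‖y - S.P (D ∪ B) y‖ + ‖T₁‖ + ‖T₂‖ + (‖u‖ + ‖T₀‖) := by
    conv_lhs => rw [hdecomp]
    exact (norm_add_le _ _).trans (add_le_add ((norm_sub_le _ _).trans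
      (add_le_add_left (norm_add_le _ _) _)) (norm_sub_le _ _))
  have hyC := hy.trans (mul_le_mul_of_nonneg_left (htail _ y) hC0)
  have huC := mul_le_mul_of_nonneg_left hunorm hC0
  calc ‖x‖ ≤ C * ((1 + K) * ‖y‖) + 3 * (C * ((1 + K) * ‖y‖)) + (1 + K) * ‖y‖ := by linarith
    _ = (4 * C + 1) * (1 + K) * ‖y‖ := by ring
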